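/- arXiv:2503.06461 — 3 statements merged into one kernel-verified Lean document; each statement's English description precedes it below -/
import Mathlib

section
/- Let n ≥ 1 be a natural number, η > 0, r ≥ 1, 0 < ε < η real numbers, and set b* = (ln r)/(2·√n·η). Let μ₋ be the n-fold product on ℝ^n of the real Gaussian measure with mean −η and variance 1. Then μ₋({x ∈ ℝ^n : ∃ δ ∈ ℝ^n, (∀ k, |δ_k| ≤ ε) ∧ (1/√n)·∑_{k=1}^n (x_k + δ_k) + b* > 0}) = Φ(−√n·(η−ε) + (ln r)/(2·√n·η)). (Theorem 1: robust error on the tail class −1 of the optimal natural classifier f*_nat under ℓ∞ perturbations of size ε.) -/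
open MeasureTheory ProbabilityTheory

/-- The standard normal CDF, as an `ℝ≥0∞`-valued measure of `Iic t`. -/
noncomputable def stdNormalCDF (t : ℝ) : ENNReal := gaussianReal 0 1 (Set.Iic t)

theorem sum_law_aux (n : ℕ) (m : ℝ) (s : Finset (Fin n)) :
    (Measure.pi fun _ : Fin n => gaussianReal m 1).map (∑ k ∈ s, fun x : Fin n → ℝ => x k)
      = gaussianReal (s.card * m) s.card := by
  have hind : iIndepFun (fun (k : Fin n) (x : Fin n → ℝ) => x k)
      (Measure.pi fun _ : Fin n => gaussianReal m 1) :=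
    iIndepFun_pi (X := fun _ => id) (fun _ => aemeasurable_id)
  induction s using Finset.induction_on with
  | empty =>
    have : (∑ k ∈ (∅ : Finset (Fin n)), fun x : Fin n → ℝ => x k) = fun _ => (0 : ℝ) := by
      simp; rfl
    rw [this, Measure.map_const]
    simp
  | insert a s ha ih =>
    rw [Finset.sum_insert ha, Finset.card_insert_of_notMem ha]
    have h1 : (Measure.pi fun _ : Fin n => gaussianReal m 1).map (fun x : Fin n → ℝ => x a)
        = gaussianReal m 1 :=
      (measurePreserving_eval (fun _ : Fin n => gaussianReal m 1) a).map_eq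
    have hi := (hind.indepFun_finsetSum_of_notMem (fun k => measurable_pi_apply k) ha).symm
    rw [gaussianReal_add_gaussianReal_of_indepFun hi h1 ih]
    congr 1
    · push_cast; ring
    · push_cast; ring

/-- Robust error on the tail class `−1` of the optimal natural classifier under
`ℓ∞` perturbations of size `ε`. -/
theorem tail_robust_error_natural (n : ℕ) (hn : 1 ≤ n) (η r ε : ℝ) (hη : 0 < η)
    (hr : 1 ≤ r) (hε : 0 < ε) (hεη : ε < η) :
    (Measure.pi fun _ : Fin n => gaussianReal (-η) 1)
      {x : Fin n → ℝ | ∃ δ : Fin n → ℝ, (∀ k, |δ k| ≤ ε) ∧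
        (1 / Real.sqrt n) * (∑ k, (x k + δ k)) + Real.log r / (2 * Real.sqrt n * η) > 0}
      = stdNormalCDF (-Real.sqrt n * (η - ε) + Real.log r / (2 * Real.sqrt n * η)) := by
  have hn0 : (0 : ℝ) < n := by exact_mod_cast hn
  have hs : 0 < Real.sqrt n := Real.sqrt_pos.2 hn0
  have hss : Real.sqrt n * Real.sqrt n = n := Real.mul_self_sqrt hn0.le
  generalize Real.log r / (2 * Real.sqrt n * η) = b
  have hsum := sum_law_aux n (-η) Finset.univ
  rw [Finset.card_univ, Fintype.card_fin] at hsum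
  have hm : Measurable (∑ k : Fin n, fun x : Fin n → ℝ => x k) := by fun_prop
  have h2 : (Measure.pi fun _ : Fin n => gaussianReal (-η) 1).map
      (fun x => -(Real.sqrt n * η) - (∑ k, x k) / Real.sqrt n) = gaussianReal 0 1 := by
    have e : (fun x : Fin n → ℝ => -(Real.sqrt n * η) - (∑ k, x k) / Real.sqrt n)
        = (fun y => -(Real.sqrt n * η) - y) ∘ (fun y => y / Real.sqrt n) ∘
          (∑ k : Fin n, fun x : Fin n → ℝ => x k) := by
      ext x; simp
    rw [e, ← Measure.map_map (by fun_prop) (by fun_prop),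
      ← Measure.map_map (by fun_prop) hm, hsum, gaussianReal_map_div_const,
      gaussianReal_map_const_sub]
    congr 1
    · field_simp; linear_combination (-η) * hss
    · ext
      simp only [NNReal.coe_div, NNReal.coe_natCast, NNReal.coe_mk, NNReal.coe_one, Real.sq_sqrt hn0.le]
      exact div_self hn0.ne'
  have hset : {x : Fin n → ℝ | ∃ δ : Fin n → ℝ, (∀ k, |δ k| ≤ ε) ∧
        (1 / Real.sqrt n) * (∑ k, (x k + δ k)) + b > 0}
      = (fun x => -(Real.sqrt n * η) - (∑ k, x k) / Real.sqrt n) ⁻¹'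
        Set.Iio (-Real.sqrt n * (η - ε) + b) := by
    have hk : (n * ε) / Real.sqrt n = Real.sqrt n * ε := by
      rw [div_eq_iff hs.ne']; linear_combination (-ε) * hss
    ext x
    simp only [Set.mem_ofPred_eq, Set.mem_preimage, Set.mem_Iio]
    constructor
    · rintro ⟨δ, hδ, h⟩
      have h3 : ∑ k, δ k ≤ n * ε := by
        calc ∑ k, δ k ≤ ∑ _k : Fin n, ε := Finset.sum_le_sum fun k _ => (abs_le.1 (hδ k)).2
          _ = n * ε := by simp
      have h4 := div_le_div_of_nonneg_right h3 hs.le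
      rw [hk] at h4
      rw [Finset.sum_add_distrib, one_div_mul_eq_div, add_div] at h
      linarith
    · intro h
      refine ⟨fun _ => ε, fun _ => (abs_of_pos hε).le, ?_⟩
      rw [Finset.sum_add_distrib, one_div_mul_eq_div, add_div]
      simp only [Finset.sum_const, Finset.card_univ, Fintype.card_fin, nsmul_eq_mul]
      rw [hk]
      linarith
  have : NullSingletonClass (gaussianReal 0 1) := nullSingletonClass_gaussianReal one_ne_zero
  rw [hset, ← Measure.map_apply (by fun_prop) measurableSet_Iio, h2, stdNormalCDF]
  exact measure_congr Iio_ae_eq_Iic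
end

section
/- Let n ≥ 1 be a natural number, η > 0, r ≥ 1, 0 < ε < η real numbers, and set b*_rob = (ln r)/(2·√n·(η−ε)). Let μ₋ be the n-fold product on ℝ^n of the real Gaussian measure with mean −η and variance 1. Then μ₋({x ∈ ℝ^n : ∃ δ ∈ ℝ^n, (∀ k, |δ_k| ≤ ε) ∧ (1/√n)·∑_{k=1}^n (x_k + δ_k) + b*_rob > 0}) = Φ(−√n·(η−ε) + (ln r)/(2·√n·(η−ε))). (Theorem 1: robust error on the tail class −1 of the optimal robust classifier f*_rob under ℓ∞ perturbations of size ε.) -/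
open MeasureTheory ProbabilityTheory

lemma pi_gaussian_map_sum (n : ℕ) (m : ℝ) :
    (Measure.pi fun _ : Fin n => gaussianReal m 1).map (fun x => ∑ k, x k)
      = gaussianReal (n * m) n := by
  have hm : Measurable (fun x : Fin n → ℝ => ∑ k, x k) := by fun_prop
  have : IsProbabilityMeasure ((Measure.pi fun _ : Fin n => gaussianReal m 1).map
      (fun x => ∑ k, x k)) := Measure.isProbabilityMeasure_map hm.aemeasurable
  apply Measure.ext_of_charFun
  ext t
  rw [charFun_apply_real, integral_map hm.aemeasurable (by fun_prop)]
  have h : ∀ x : Fin n → ℝ, Complex.exp (t * ((∑ k, x k : ℝ) : ℂ) * Complex.I)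
      = ∏ k, Complex.exp (t * (x k : ℂ) * Complex.I) := by
    intro x
    rw [← Complex.exp_sum]
    push_cast
    rw [Finset.mul_sum, Finset.sum_mul]
  simp_rw [h]
  rw [integral_fintype_prod_eq_prod (μ := fun _ : Fin n => gaussianReal m 1)
    (f := fun _ (y : ℝ) => Complex.exp (t * (y : ℂ) * Complex.I))]
  simp_rw [← charFun_apply_real, charFun_gaussianReal]
  rw [Finset.prod_const, Finset.card_univ, Fintype.card_fin, ← Complex.exp_nat_mul]
  congr 1
  push_cast
  ring

/-- Robust error on the tail class `−1` of the optimal robust classifier under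
`ℓ∞` perturbations of size `ε`. -/
theorem tail_robust_error_robust (n : ℕ) (hn : 1 ≤ n) (η r ε : ℝ) (hη : 0 < η)
    (hr : 1 ≤ r) (hε : 0 < ε) (hεη : ε < η) :
    (Measure.pi fun _ : Fin n => gaussianReal (-η) 1)
      {x : Fin n → ℝ | ∃ δ : Fin n → ℝ, (∀ k, |δ k| ≤ ε) ∧
        (1 / Real.sqrt n) * (∑ k, (x k + δ k)) + Real.log r / (2 * Real.sqrt n * (η - ε)) > 0}
      = stdNormalCDF (-Real.sqrt n * (η - ε) + Real.log r / (2 * Real.sqrt n * (η - ε))) := by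
  generalize Real.log r / (2 * Real.sqrt n * (η - ε)) = b
  have hn0 : (0 : ℝ) < n := by exact_mod_cast hn
  have hs : 0 < Real.sqrt n := Real.sqrt_pos.2 hn0
  have hss : Real.sqrt n * Real.sqrt n = n := Real.mul_self_sqrt hn0.le
  have hdiv : (n : ℝ) / Real.sqrt n = Real.sqrt n := by
    rw [div_eq_iff hs.ne', hss]
  set s := Real.sqrt n with hsdef
  have hset : {x : Fin n → ℝ | ∃ δ : Fin n → ℝ, (∀ k, |δ k| ≤ ε) ∧
        (1 / s) * (∑ k, (x k + δ k)) + b > 0}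
      = (fun x => ∑ k, x k) ⁻¹' ((fun y => y / (-s)) ⁻¹'
          ((fun z => z - s * η) ⁻¹' (Set.Iio (-s * (η - ε) + b)))) := by
    ext x
    simp only [Set.mem_setOf_eq, Set.mem_preimage, Set.mem_Iio]
    have key : ∀ D : ℝ, (1 / s) * (∑ k, x k + D) + b
        = D / s + b - (∑ k, x k) / (-s) := by
      intro D
      field_simp
      ring
    have hD : (n * ε) / s = s * ε := by rw [mul_div_right_comm, hdiv]
    constructor
    · rintro ⟨δ, hδ, h⟩
      rw [Finset.sum_add_distrib, key] at h
      have h1 : ∑ k, δ k ≤ n * ε := by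
        calc ∑ k, δ k ≤ ∑ _k : Fin n, ε :=
              Finset.sum_le_sum fun k _ => (le_abs_self _).trans (hδ k)
          _ = n * ε := by simp
      have h2 : (∑ k, δ k) / s ≤ (n * ε) / s := by gcongr
      rw [hD] at h2
      linarith
    · intro h
      refine ⟨fun _ => ε, fun _ => (abs_of_pos hε).le, ?_⟩
      rw [Finset.sum_add_distrib, key]
      simp only [Finset.sum_const, Finset.card_univ, Fintype.card_fin, nsmul_eq_mul]
      rw [hD]
      linarith
  rw [hset, ← Measure.map_apply (by fun_prop)
      (measurableSet_Iio.preimage (by fun_prop) |>.preimage (by fun_prop)),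
    pi_gaussian_map_sum, ← Measure.map_apply (by fun_prop)
      (measurableSet_Iio.preimage (by fun_prop)),
    gaussianReal_map_div_const, ← Measure.map_apply (by fun_prop) measurableSet_Iio,
    gaussianReal_map_sub_const, stdNormalCDF]
  have hmean : n * -η / -s - s * η = 0 := by
    rw [mul_neg, neg_div_neg_eq, mul_div_right_comm, hdiv, sub_self]
  have hvar : (n : NNReal) / ⟨(-s) ^ 2, sq_nonneg _⟩ = 1 := by
    apply NNReal.eq
    push_cast
    change (n : ℝ) / (-s) ^ 2 = 1
    rw [neg_sq, sq, hss, div_self hn0.ne']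
  rw [hmean]
  first
    | rw [hvar]
    | erw [hvar]
  have := nullSingletonClass_gaussianReal (μ := 0) (v := 1) one_ne_zero
  exact measure_congr Iio_ae_eq_Iic
end

section
/- Let n ≥ 1 be a natural number and η, b ∈ ℝ and ε ≥ 0. Let μ₊ be the n-fold product on ℝ^n of the real Gaussian measure with mean +η and variance 1. Then μ₊({x ∈ ℝ^n : ∃ δ ∈ ℝ^n, (∀ k, |δ_k| ≤ ε) ∧ (1/√n)·∑_{k=1}^n (x_k + δ_k) + b < 0}) = Φ(−√n·(η−ε) − b). (Robust error on the head class +1 of the uniform-weight linear classifier with arbitrary bias b under ℓ∞ perturbations of size ε, as computed in the proof of Theorem 1.) -/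
open MeasureTheory ProbabilityTheory

lemma map_sum_gaussian (n : ℕ) (η : ℝ) (s : Finset (Fin n)) :
    (Measure.pi fun _ : Fin n => gaussianReal η 1).map (∑ k ∈ s, fun x : Fin n → ℝ => x k)
      = gaussianReal (s.card * η) s.card := by
  classical
  induction s using Finset.induction_on with
  | empty =>
    simp only [Finset.sum_empty, Finset.card_empty, Nat.cast_zero, zero_mul,
      gaussianReal_zero_var]
    have : (0 : (Fin n → ℝ) → ℝ) = fun _ => 0 := rfl
    rw [this, Measure.map_const]
    simp
  | insert a s ha ih =>
    have hind : iIndepFun (fun (i : Fin n) (ω : Fin n → ℝ) => ω i)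
        (Measure.pi fun _ : Fin n => gaussianReal η 1) :=
      iIndepFun_pi (X := fun _ x => x) (fun _ => aemeasurable_id)
    have h1 := hind.indepFun_finsetSum_of_notMem (fun i => measurable_pi_apply i) ha
    have h2 := gaussianReal_add_gaussianReal_of_indepFun h1 ih
      (measurePreserving_eval (fun _ : Fin n => gaussianReal η 1) a).map_eq
    rw [Finset.sum_insert ha, add_comm, h2, Finset.card_insert_of_notMem ha]
    push_cast
    congr 1
    ring

/-- Robust error on the head class `+1` of the uniform-weight linear classifier with
arbitrary bias `b` under `ℓ∞` perturbations of size `ε`. -/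
theorem head_robust_error (n : ℕ) (hn : 1 ≤ n) (η b ε : ℝ) (hε : 0 ≤ ε) :
    (Measure.pi fun _ : Fin n => gaussianReal η 1)
      {x : Fin n → ℝ | ∃ δ : Fin n → ℝ, (∀ k, |δ k| ≤ ε) ∧
        (1 / Real.sqrt n) * (∑ k, (x k + δ k)) + b < 0}
      = stdNormalCDF (-Real.sqrt n * (η - ε) - b) := by
  have hn0 : (0 : ℝ) < n := by exact_mod_cast hn
  have hs : 0 < Real.sqrt n := Real.sqrt_pos.2 hn0
  have hss : Real.sqrt n * Real.sqrt n = n := Real.mul_self_sqrt hn0.le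
  have hset : {x : Fin n → ℝ | ∃ δ : Fin n → ℝ, (∀ k, |δ k| ≤ ε) ∧
        (1 / Real.sqrt n) * (∑ k, (x k + δ k)) + b < 0}
      = (∑ k ∈ Finset.univ, fun x : Fin n → ℝ => x k) ⁻¹'
        ((fun y : ℝ => (y - n * η) / Real.sqrt n) ⁻¹'
          Set.Iio (-Real.sqrt n * (η - ε) - b)) := by
    ext x
    simp only [Set.mem_ofPred_eq, Set.mem_preimage, Set.mem_Iio, Finset.sum_apply,
      Finset.sum_add_distrib]
    rw [div_lt_iff₀ hs]
    have key : ∀ D : ℝ, (1 / Real.sqrt n * (∑ k, x k + D) + b < 0 ↔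
        ∑ k, x k + D + b * Real.sqrt n < 0) := by
      intro D
      have : ∑ k, x k + D + b * Real.sqrt n
          = Real.sqrt n * (1 / Real.sqrt n * (∑ k, x k + D) + b) := by
        field_simp
      rw [this, mul_neg_iff]
      constructor
      · intro h; exact Or.inl ⟨hs, h⟩
      · rintro (h | h)
        · exact h.2
        · linarith [h.1]
    have e : (-Real.sqrt n * (η - ε) - b) * Real.sqrt n
        = -n * (η - ε) - b * Real.sqrt n := by
      rw [← hss]; simp only [hss]; linear_combination (-(η - ε)) * hss
    rw [e]
    constructor
    · rintro ⟨δ, hδ, h⟩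
      rw [key] at h
      have : ∑ k : Fin n, (-ε) ≤ ∑ k, δ k :=
        Finset.sum_le_sum fun k _ => (abs_le.1 (hδ k)).1
      simp at this
      linarith
    · intro h
      refine ⟨fun _ => -ε, fun _ => by simp [abs_of_nonneg hε], ?_⟩
      rw [key]
      simp
      linarith
  have hm : Measurable (∑ k ∈ Finset.univ, fun x : Fin n → ℝ => x k) := by
    have : (∑ k ∈ Finset.univ, fun x : Fin n → ℝ => x k) = fun x => ∑ k, x k := by
      ext x; simp
    rw [this]
    fun_prop
  have hg : Measurable (fun y : ℝ => (y - n * η) / Real.sqrt n) := by fun_prop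
  have hlaw : (gaussianReal (n * η) n).map (fun y : ℝ => (y - n * η) / Real.sqrt n)
      = gaussianReal 0 1 := by
    have : (fun y : ℝ => (y - n * η) / Real.sqrt n)
      = (fun y => y / Real.sqrt n) ∘ (fun y => y - n * η) := rfl
    rw [this, ← Measure.map_map (by fun_prop) (by fun_prop), gaussianReal_map_sub_const,
      gaussianReal_map_div_const]
    congr 1
    · simp
    · ext
      simp [hn0.le, hn0.ne']
  haveI := nullSingletonClass_gaussianReal (μ := 0) (v := 1) one_ne_zero
  rw [hset, ← Measure.map_apply hm (hg measurableSet_Iio), map_sum_gaussian,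
    ← Measure.map_apply (by simpa using hg) measurableSet_Iio]
  simp only [Finset.card_univ, Fintype.card_fin]
  rw [hlaw, stdNormalCDF]
  exact measure_congr Iio_ae_eq_Iic
end
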